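/- Let O be a commutative ring, n ≥ 1, and A, A' two O-algebras. Regard A≀Sₙ and A'≀Sₙ as Sₙ-graded algebras with σ-components A^{⊗n} ⊗ Oσ and A'^{⊗n} ⊗ Oσ respectively, and let Δ_{Sₙ}(A≀Sₙ ⊗ (A'≀Sₙ)^{op}) := ⊕_{σ∈Sₙ} (A≀Sₙ)_σ ⊗ ((A'≀Sₙ)^{op})_σ be the diagonal subalgebra of A≀Sₙ ⊗_O (A'≀Sₙ)^{op} with respect to the diagonal subgroup δ(Sₙ) = {(σ,σ⁻¹) : σ ∈ Sₙ}, where ((A'≀Sₙ)^{op})_σ = ((A'≀Sₙ)_{σ⁻¹})^{op}. Then there is an isomorphism of O-algebras Δ_{Sₙ}(A≀Sₙ ⊗ (A'≀Sₙ)^{op}) ≅ (A^{⊗n} ⊗ (A'^{⊗n})^{op}) ⊗ OSₙ, where the right-hand side is the wreath product (A ⊗ A'^{op}-type) algebra with multiplication twisted by the permutation action of Sₙ on the n-fold tensor factors. -/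

import Mathlib

open scoped TensorProduct
open PiTensorProduct MulOpposite

/-- The permutation action of `Sₙ` on `Gⁿ`. -/
def permMulAut (G : Type*) [Group G] (n : ℕ) :
    Equiv.Perm (Fin n) →* MulAut (Fin n → G) where
  toFun σ :=
    { toEquiv := Equiv.arrowCongr σ (Equiv.refl G)
      map_mul' := fun _ _ => rfl }
  map_one' := by ext g i; rfl
  map_mul' := fun σ τ => by ext g i; rfl

/-- `(e, s)` presents the `O`-algebra `W` as the wreath product `T ≀ Sₙ` of the
`O`-algebra `T` (carrying an `Sₙ`-action `Φ`): `e` is injective,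
`W = ⊕_σ e(T)·s(σ)` as an `O`-module, and `s(σ) e(t) = e(^σ t) s(σ)`. -/
def IsWreathPresentation (O : Type*) [CommRing O] {n : ℕ} {T W : Type*}
    [Ring T] [Algebra O T] [Ring W] [Algebra O W]
    (e : T →ₐ[O] W) (s : Equiv.Perm (Fin n) →* Wˣ)
    (Φ : Equiv.Perm (Fin n) →* (T ≃ₐ[O] T)) : Prop :=
  Function.Injective e ∧
  (letI := Classical.decEq (Equiv.Perm (Fin n));
    DirectSum.IsInternal fun σ : Equiv.Perm (Fin n) =>
      Submodule.map (LinearMap.mulRight O ((s σ : Wˣ) : W))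
        (Subalgebra.toSubmodule e.range)) ∧
  ∀ (σ : Equiv.Perm (Fin n)) (t : T),
    ((s σ : Wˣ) : W) * e t = e (Φ σ t) * ((s σ : Wˣ) : W)

/-- The `σ`-component `T ⊗ Oσ = e(T)·s(σ)` of the `Sₙ`-grading of `W = T ≀ Sₙ`. -/
def wreathSGrading (O : Type*) [CommRing O] {n : ℕ} {T W : Type*}
    [Ring T] [Algebra O T] [Ring W] [Algebra O W]
    (e : T →ₐ[O] W) (s : Equiv.Perm (Fin n) →* Wˣ)
    (σ : Equiv.Perm (Fin n)) : Submodule O W :=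
  Submodule.map (LinearMap.mulRight O ((s σ : Wˣ) : W)) (Subalgebra.toSubmodule e.range)

/-- The diagonal subalgebra `Δ_{Sₙ}(W ⊗ W'^{op}) = ⊕_σ W_σ ⊗ (W'^{op})_σ`, where
`(W'^{op})_σ = (W'_{σ⁻¹})^{op}`, as a submodule of `W ⊗[O] W'ᵐᵒᵖ`. -/
noncomputable def diagonalSub (O : Type*) [CommRing O] {n : ℕ} {T T' W W' : Type*}
    [Ring T] [Algebra O T] [Ring T'] [Algebra O T']
    [Ring W] [Algebra O W] [Ring W'] [Algebra O W']
    (e : T →ₐ[O] W) (s : Equiv.Perm (Fin n) →* Wˣ)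
    (e' : T' →ₐ[O] W') (s' : Equiv.Perm (Fin n) →* W'ˣ) :
    Submodule O (W ⊗[O] W'ᵐᵒᵖ) :=
  ⨆ σ : Equiv.Perm (Fin n),
    Submodule.span O (Set.image2 (· ⊗ₜ[O] ·)
      ((wreathSGrading O e s σ : Set W))
      ((Submodule.map (opLinearEquiv O).toLinearMap (wreathSGrading O e' s' σ⁻¹) :
        Submodule O W'ᵐᵒᵖ) : Set W'ᵐᵒᵖ))

section Helpers

variable {O : Type*} [CommRing O] {n : ℕ}

/-- The coordinates of a wreath product. -/
theorem wreath_coords {T W : Type*}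
    [Ring T] [Algebra O T] [Ring W] [Algebra O W]
    {e : T →ₐ[O] W} {s : Equiv.Perm (Fin n) →* Wˣ}
    {Φ : Equiv.Perm (Fin n) →* (T ≃ₐ[O] T)}
    (h : IsWreathPresentation O e s Φ) :
    ∃ p : Equiv.Perm (Fin n) → W →ₗ[O] T,
      (∀ w, w = ∑ σ, e (p σ w) * (s σ : W)) ∧
      (∀ σ t, p σ (e t * (s σ : W)) = t) ∧
      (∀ σ τ t, σ ≠ τ → p σ (e t * (s τ : W)) = 0) := by
  classical
  obtain ⟨hinj, hint, -⟩ := h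
  have hind := @DirectSum.IsInternal.submodule_iSupIndep _ _ _
    (Classical.decEq (Equiv.Perm (Fin n))) _ _ _ _ hint
  have htop := @DirectSum.IsInternal.submodule_iSup_eq_top _ _ _
    (Classical.decEq (Equiv.Perm (Fin n))) _ _ _ _ hint
  let L : (Equiv.Perm (Fin n) → T) →ₗ[O] W :=
    ∑ σ, (LinearMap.mulRight O (s σ : W)) ∘ₗ e.toLinearMap ∘ₗ LinearMap.proj σ
  have hL : ∀ f, L f = ∑ σ, e (f σ) * (s σ : W) := by
    intro f; simp [L]
  have hsingle : ∀ σ t, L (Pi.single σ t) = e t * (s σ : W) := by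
    intro σ t
    rw [hL, Finset.sum_eq_single σ]
    · simp
    · intro b _ hb
      simp [Pi.single_eq_of_ne hb]
    · simp
  have hbij : Function.Bijective L := by
    constructor
    · rw [injective_iff_map_eq_zero]
      intro f hf
      rw [hL] at hf
      rw [iSupIndep_iff_finsetSum_eq_zero_imp_eq_zero] at hind
      funext σ
      have := hind Finset.univ (fun σ => e (f σ) * (s σ : W))
        (fun i _ => ⟨e (f i), ⟨f i, rfl⟩, rfl⟩) hf σ (Finset.mem_univ _)
      have h2 : e (f σ) = 0 := by simpa using this
      exact hinj (by simpa using h2)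
    · rw [← LinearMap.range_eq_top, eq_top_iff, ← htop, iSup_le_iff]
      rintro σ _ ⟨_, ⟨t, rfl⟩, rfl⟩
      exact ⟨Pi.single σ t, hsingle σ t⟩
  let E := LinearEquiv.ofBijective L hbij
  have hE : ∀ f, E f = L f := fun _ => rfl
  have hs : ∀ σ t, E.symm (e t * (s σ : W)) = Pi.single σ t := by
    intro σ t
    rw [LinearEquiv.symm_apply_eq, hE, hsingle]
  refine ⟨fun σ => LinearMap.proj σ ∘ₗ E.symm.toLinearMap, ?_, ?_, ?_⟩
  · intro w
    have := hL (E.symm w)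
    rw [← hE, LinearEquiv.apply_symm_apply] at this
    exact this
  · intro σ t
    simp [hs]
  · intro σ τ t hne
    simp [hs, Pi.single_eq_of_ne hne]

/-- Universal property of the wreath product. -/
theorem wreath_lift {T W X : Type*}
    [Ring T] [Algebra O T] [Ring W] [Algebra O W] [Ring X] [Algebra O X]
    {e : T →ₐ[O] W} {s : Equiv.Perm (Fin n) →* Wˣ}
    {Φ : Equiv.Perm (Fin n) →* (T ≃ₐ[O] T)}
    (h : IsWreathPresentation O e s Φ)
    (E : T →ₐ[O] X) (S : Equiv.Perm (Fin n) →* X)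
    (hS : ∀ σ t, S σ * E t = E (Φ σ t) * S σ) :
    ∃ F : W →ₐ[O] X, ∀ σ t, F (e t * (s σ : W)) = E t * S σ := by
  classical
  obtain ⟨p, hp, hp1, hp2⟩ := wreath_coords h
  obtain ⟨-, -, hcomm⟩ := h
  let F : W →ₗ[O] X := ∑ σ, (LinearMap.mulRight O (S σ)) ∘ₗ E.toLinearMap ∘ₗ p σ
  have hF : ∀ σ t, F (e t * (s σ : W)) = E t * S σ := by
    intro σ t
    have : F (e t * (s σ : W)) = ∑ τ, E (p τ (e t * (s σ : W))) * S τ := by simp [F]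
    rw [this, Finset.sum_eq_single σ]
    · rw [hp1]
    · intro b _ hb
      rw [hp2 _ _ _ hb]; simp
    · simp
  refine ⟨AlgHom.ofLinearMap F ?_ ?_, hF⟩
  · have := hF 1 1
    simpa using this
  · intro x y
    have key : ∀ σ τ t u, F ((e t * (s σ : W)) * (e u * (s τ : W))) =
        F (e t * (s σ : W)) * F (e u * (s τ : W)) := by
      intro σ τ t u
      have : (e t * (s σ : W)) * (e u * (s τ : W)) = e (t * Φ σ u) * (s (σ * τ) : W) := by
        rw [mul_assoc, ← mul_assoc (s σ : W), hcomm]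
        simp [mul_assoc]
      rw [this, hF, hF, hF, map_mul, map_mul, mul_assoc (E t) (S σ), ← mul_assoc (S σ), hS]
      simp only [mul_assoc]
    rw [hp x, hp y, Finset.sum_mul_sum]
    simp only [map_sum, Finset.sum_mul_sum, key]

theorem stmt11_aux {T T' : Type*} [Ring T] [Algebra O T] [Ring T'] [Algebra O T']
    (Φ : Equiv.Perm (Fin n) →* (T ≃ₐ[O] T))
    (Φ' : Equiv.Perm (Fin n) →* (T' ≃ₐ[O] T'))
    (ΦV : Equiv.Perm (Fin n) →* ((T ⊗[O] T'ᵐᵒᵖ) ≃ₐ[O] (T ⊗[O] T'ᵐᵒᵖ)))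
    (hΦV : ∀ σ x y, ΦV σ (x ⊗ₜ[O] op y) = Φ σ x ⊗ₜ[O] op (Φ' σ y))
    {W : Type*} [Ring W] [Algebra O W]
    (e : T →ₐ[O] W) (s : Equiv.Perm (Fin n) →* Wˣ)
    (hW : IsWreathPresentation O e s Φ)
    {W' : Type*} [Ring W'] [Algebra O W']
    (e' : T' →ₐ[O] W') (s' : Equiv.Perm (Fin n) →* W'ˣ)
    (hW' : IsWreathPresentation O e' s' Φ')
    {V : Type*} [Ring V] [Algebra O V]
    (eV : (T ⊗[O] T'ᵐᵒᵖ) →ₐ[O] V)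
    (sV : Equiv.Perm (Fin n) →* Vˣ)
    (hV : IsWreathPresentation O eV sV ΦV) :
    ∃ F : V →ₐ[O] (W ⊗[O] W'ᵐᵒᵖ),
      Function.Injective F ∧
      LinearMap.range F.toLinearMap = diagonalSub O e s e' s' ∧
      (∀ x y, F (eV (x ⊗ₜ[O] op y)) = e x ⊗ₜ[O] op (e' y)) ∧
      (∀ σ : Equiv.Perm (Fin n),
        F ((sV σ : Vˣ) : V) = ((s σ : Wˣ) : W) ⊗ₜ[O] op ((s' σ⁻¹ : W'ˣ) : W')) := by
  classical
  let E : (T ⊗[O] T'ᵐᵒᵖ) →ₐ[O] (W ⊗[O] W'ᵐᵒᵖ) := Algebra.TensorProduct.map e (AlgHom.op e')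
  have hE : ∀ x y, E (x ⊗ₜ[O] op y) = e x ⊗ₜ[O] op (e' y) := fun x y => rfl
  let S : Equiv.Perm (Fin n) →* (W ⊗[O] W'ᵐᵒᵖ) :=
    { toFun := fun σ => (s σ : W) ⊗ₜ[O] op (s' σ⁻¹ : W')
      map_one' := by simp [Algebra.TensorProduct.one_def]
      map_mul' := fun σ τ => by
        rw [Algebra.TensorProduct.tmul_mul_tmul, ← op_mul, mul_inv_rev, map_mul, map_mul]
        simp only [Units.val_mul] }
  have hSdef : ∀ σ, S σ = (s σ : W) ⊗ₜ[O] op (s' σ⁻¹ : W') := fun _ => rfl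
  have hc := hW.2.2
  have hc' := hW'.2.2
  have hflip : ∀ σ y, (s' σ⁻¹ : W') * e' (Φ' σ y) = e' y * (s' σ⁻¹ : W') := by
    intro σ y
    rw [hc', ← AlgEquiv.mul_apply, ← map_mul]
    simp
  have hS : ∀ σ t, S σ * E t = E (ΦV σ t) * S σ := by
    intro σ t
    induction t using TensorProduct.induction_on with
    | zero => simp
    | add a b ha hb => simp only [map_add, mul_add, add_mul, ha, hb]
    | tmul x y =>
      induction y using MulOpposite.rec' with
      | h y =>
      rw [hΦV, hE, hE, hSdef, Algebra.TensorProduct.tmul_mul_tmul,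
        Algebra.TensorProduct.tmul_mul_tmul, ← op_mul, ← op_mul, hc, hflip]
  obtain ⟨F, hF⟩ := wreath_lift hV E S hS
  obtain ⟨p, hp, hp1, hp2⟩ := wreath_coords hW
  obtain ⟨p', hp', hp1', hp2'⟩ := wreath_coords hW'
  obtain ⟨q, hq, hq1, hq2⟩ := wreath_coords hV
  have hES : ∀ σ x y, E (x ⊗ₜ[O] op y) * S σ =
      (e x * (s σ : W)) ⊗ₜ[O] op (e' (Φ' σ⁻¹ y) * (s' σ⁻¹ : W')) := by
    intro σ x y
    rw [hE, hSdef, Algebra.TensorProduct.tmul_mul_tmul, ← op_mul, hc']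
  let R' : Equiv.Perm (Fin n) → W'ᵐᵒᵖ →ₗ[O] T'ᵐᵒᵖ := fun σ =>
    (opLinearEquiv O).toLinearMap ∘ₗ (Φ' σ).toLinearMap ∘ₗ p' σ⁻¹ ∘ₗ
      (opLinearEquiv O).symm.toLinearMap
  have hR' : ∀ σ w, R' σ (op w) = op (Φ' σ (p' σ⁻¹ w)) := fun _ _ => rfl
  let R : Equiv.Perm (Fin n) → (W ⊗[O] W'ᵐᵒᵖ) →ₗ[O] (T ⊗[O] T'ᵐᵒᵖ) := fun σ =>
    TensorProduct.map (p σ) (R' σ)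
  have hR1 : ∀ σ t, R σ (E t * S σ) = t := by
    intro σ t
    induction t using TensorProduct.induction_on with
    | zero => simp
    | add a b ha hb => simp only [map_add, add_mul, ha, hb]
    | tmul x y =>
      induction y using MulOpposite.rec' with
      | h y =>
      rw [hES, TensorProduct.map_tmul, hR', hp1, hp1', ← AlgEquiv.mul_apply, ← map_mul]
      simp
  have hR2 : ∀ σ τ t, σ ≠ τ → R σ (E t * S τ) = 0 := by
    intro σ τ t hne
    induction t using TensorProduct.induction_on with
    | zero => simp
    | add a b ha hb => simp only [map_add, add_mul, ha, hb, add_zero]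
    | tmul x y =>
      induction y using MulOpposite.rec' with
      | h y =>
      rw [hES, TensorProduct.map_tmul, hp2 _ _ _ hne, TensorProduct.zero_tmul]
  have hFv : ∀ v, F v = ∑ σ, E (q σ v) * S σ := by
    intro v
    conv_lhs => rw [hq v]
    simp only [map_sum, hF]
  have hRF : ∀ σ v, R σ (F v) = q σ v := by
    intro σ v
    rw [hFv, map_sum, Finset.sum_eq_single σ]
    · rw [hR1]
    · intro b _ hb
      exact hR2 _ _ _ hb.symm
    · simp
  refine ⟨F, ?_, ?_, ?_, ?_⟩
  · rw [injective_iff_map_eq_zero]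
    intro v hv
    rw [hq v]
    refine Finset.sum_eq_zero fun σ _ => ?_
    rw [← hRF, hv]
    simp
  · apply le_antisymm
    · rintro _ ⟨v, rfl⟩
      change F v ∈ _
      rw [hFv]
      refine Submodule.sum_mem _ fun σ _ => ?_
      refine Submodule.mem_iSup_of_mem σ ?_
      generalize q σ v = t
      induction t using TensorProduct.induction_on with
      | zero => simp
      | add a b ha hb =>
        rw [map_add, add_mul]
        exact Submodule.add_mem _ ha hb
      | tmul x y =>
        induction y using MulOpposite.rec' with
        | h y =>
        rw [hES]
        refine Submodule.subset_span ⟨_, ⟨_, ⟨x, rfl⟩, rfl⟩, _, ⟨_, ⟨_, ⟨Φ' σ⁻¹ y, rfl⟩, rfl⟩, rfl⟩, rfl⟩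
    · refine iSup_le fun σ => Submodule.span_le.2 ?_
      rintro _ ⟨_, ⟨_, ⟨x, rfl⟩, rfl⟩, _, ⟨_, ⟨_, ⟨y, rfl⟩, rfl⟩, rfl⟩, rfl⟩
      refine ⟨eV (x ⊗ₜ op (Φ' σ y)) * (sV σ : V), ?_⟩
      change F _ = (e x * (s σ : W)) ⊗ₜ[O] op (e' y * (s' σ⁻¹ : W'))
      rw [hF, hES, ← AlgEquiv.mul_apply, ← map_mul]
      simp
  · intro x y
    have := hF 1 (x ⊗ₜ op y)
    rw [← hE]
    simpa using this
  · intro σ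
    have := hF σ 1
    rw [← hSdef]
    simpa using this

end Helpers

theorem stmt11 (O : Type*) [CommRing O] (n : ℕ) (hn : 1 ≤ n)
    (A A' : Type*) [Ring A] [Algebra O A] [Ring A'] [Algebra O A']
    -- the permutation actions of `Sₙ` on `A^{⊗n}`, `A'^{⊗n}`
    (Φ : Equiv.Perm (Fin n) →* ((⨂[O] _i : Fin n, A) ≃ₐ[O] (⨂[O] _i : Fin n, A)))
    (hΦ : ∀ (σ : Equiv.Perm (Fin n)) (a : Fin n → A),
      Φ σ (tprod O a) = tprod O (fun i => a (σ.symm i)))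
    (Φ' : Equiv.Perm (Fin n) →* ((⨂[O] _i : Fin n, A') ≃ₐ[O] (⨂[O] _i : Fin n, A')))
    (hΦ' : ∀ (σ : Equiv.Perm (Fin n)) (a' : Fin n → A'),
      Φ' σ (tprod O a') = tprod O (fun i => a' (σ.symm i)))
    -- and the simultaneous permutation action of `Sₙ` on `A^{⊗n} ⊗ (A'^{⊗n})^{op}`
    (ΦV : Equiv.Perm (Fin n) →*
      (((⨂[O] _i : Fin n, A) ⊗[O] (⨂[O] _i : Fin n, A')ᵐᵒᵖ) ≃ₐ[O]
        ((⨂[O] _i : Fin n, A) ⊗[O] (⨂[O] _i : Fin n, A')ᵐᵒᵖ)))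
    (hΦV : ∀ (σ : Equiv.Perm (Fin n)) (a : Fin n → A) (a' : Fin n → A'),
      ΦV σ (tprod O a ⊗ₜ[O] op (tprod O a')) =
        tprod O (fun i => a (σ.symm i)) ⊗ₜ[O] op (tprod O (fun i => a' (σ.symm i))))
    -- the wreath product algebras `W = A ≀ Sₙ`, `W' = A' ≀ Sₙ` and
    -- `V = (A^{⊗n} ⊗ (A'^{⊗n})^{op}) ⊗ OSₙ` (with multiplication twisted by `Sₙ`)
    (W : Type*) [Ring W] [Algebra O W]
    (e : (⨂[O] _i : Fin n, A) →ₐ[O] W) (s : Equiv.Perm (Fin n) →* Wˣ)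
    (hW : IsWreathPresentation O e s Φ)
    (W' : Type*) [Ring W'] [Algebra O W']
    (e' : (⨂[O] _i : Fin n, A') →ₐ[O] W') (s' : Equiv.Perm (Fin n) →* W'ˣ)
    (hW' : IsWreathPresentation O e' s' Φ')
    (V : Type*) [Ring V] [Algebra O V]
    (eV : ((⨂[O] _i : Fin n, A) ⊗[O] (⨂[O] _i : Fin n, A')ᵐᵒᵖ) →ₐ[O] V)
    (sV : Equiv.Perm (Fin n) →* Vˣ)
    (hV : IsWreathPresentation O eV sV ΦV) :
    -- there is an isomorphism of `O`-algebras
    -- `(A^{⊗n} ⊗ (A'^{⊗n})^{op}) ⊗ OSₙ ≅ Δ_{Sₙ}(A≀Sₙ ⊗ (A'≀Sₙ)^{op})`,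
    -- `x ⊗ op y ⊗ e ↦ (x ⊗ e) ⊗ op (y ⊗ e)`, `1 ⊗ σ ↦ (1 ⊗ σ) ⊗ op (1 ⊗ σ⁻¹)`
    ∃ F : V →ₐ[O] (W ⊗[O] W'ᵐᵒᵖ),
      Function.Injective F ∧
      LinearMap.range F.toLinearMap = diagonalSub O e s e' s' ∧
      (∀ (x : ⨂[O] _i : Fin n, A) (y : ⨂[O] _i : Fin n, A'),
        F (eV (x ⊗ₜ[O] op y)) = e x ⊗ₜ[O] op (e' y)) ∧
      (∀ σ : Equiv.Perm (Fin n),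
        F ((sV σ : Vˣ) : V) = ((s σ : Wˣ) : W) ⊗ₜ[O] op ((s' σ⁻¹ : W'ˣ) : W')) := by
  refine stmt11_aux Φ Φ' ΦV ?_ e s hW e' s' hW' eV sV hV
  intro σ x y
  induction x using PiTensorProduct.induction_on with
  | add a b ha hb => simp only [map_add, TensorProduct.add_tmul, ha, hb]
  | smul_tprod r a =>
    induction y using PiTensorProduct.induction_on with
    | add c d hc hd => simp only [map_add, op_add, TensorProduct.tmul_add, hc, hd]
    | smul_tprod r' a' =>
      simp only [map_smul, op_smul, TensorProduct.tmul_smul, ← TensorProduct.smul_tmul',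
        hΦV, hΦ, hΦ']
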